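/- arXiv:2003.13190 — 2 statements merged into one kernel-verified Lean document; each statement's English description precedes it below -/
import Mathlib

section
/- Let n = n_A + n_B, ħ > 0, and let Σ be a real symmetric 2n×2n matrix. The following are equivalent: (i) there exist real symmetric matrices Σ_A (2n_A×2n_A) and Σ_B (2n_B×2n_B) with Σ_A + (iħ/2)J_{n_A} ≥ 0, Σ_B + (iħ/2)J_{n_B} ≥ 0, and Σ − (Σ_A ⊕ Σ_B) positive semidefinite; (ii) there exist S_A ∈ Sp(n_A) and S_B ∈ Sp(n_B) such that Σ − (ħ/2)((S_Aᵀ S_A)⁻¹ ⊕ (S_Bᵀ S_B)⁻¹) is positive semidefinite. -/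
open Matrix
open scoped ComplexOrder

noncomputable section

/-- The phase space index type for `ℝ^{2m}`, split as positions ⊕ momenta. -/
abbrev PS (m : ℕ) := Fin m ⊕ Fin m

/-- The standard symplectic matrix `J_m = [[0, I_m], [-I_m, 0]]`. -/
def symplJ (m : ℕ) : Matrix (PS m) (PS m) ℝ := Matrix.fromBlocks 0 1 (-1) 0

/-- `S ∈ Sp(m)`: `Sᵀ J_m S = J_m`. -/
def IsSymplectic {m : ℕ} (S : Matrix (PS m) (PS m) ℝ) : Prop :=
  Sᵀ * symplJ m * S = symplJ m

/-- The quantum condition `Σ + (i·hbar/2) J_m ≥ 0`, i.e. the complex Hermitian matrix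
`Σ + (i·hbar/2) J_m` is positive semidefinite. -/
def QuantumCond (m : ℕ) (hbar : ℝ) (Sig : Matrix (PS m) (PS m) ℝ) : Prop :=
  (Sig.map Complex.ofReal + (hbar / 2 : ℝ) • Complex.I • (symplJ m).map Complex.ofReal).PosSemidef

/-- `μ ∈ ℂ` is an eigenvalue of the real matrix `N` (viewed as a complex matrix). -/
def IsEigenvalue {ι : Type} [Fintype ι] [DecidableEq ι] (N : Matrix ι ι ℝ) (μ : ℂ) : Prop :=
  (N.map Complex.ofReal - μ • 1).det = 0

theorem real_sqrt_exists {ι : Type} [Fintype ι] [DecidableEq ι] (P : Matrix ι ι ℝ)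
    (hP : P.PosSemidef) :
    ∃ R : Matrix ι ι ℝ, R.PosSemidef ∧ R * R = P ∧
      (∀ B, Commute P B → Commute R B) ∧
      (∀ B : Matrix ι ι ℝ, B.PosSemidef → B * B = P → B = R) := by
  open scoped MatrixOrder in
  refine ⟨CFC.sqrt P, ?_, ?_, ?_, ?_⟩
  · exact Matrix.nonneg_iff_posSemidef.mp (CFC.sqrt_nonneg P)
  · exact CFC.sqrt_mul_sqrt_self P (Matrix.nonneg_iff_posSemidef.mpr hP)
  · intro B hB
    exact Commute.cfcₙ_nnreal hB _
  · intro B hB h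
    exact (CFC.sqrt_unique h (Matrix.nonneg_iff_posSemidef.mpr hB)).symm

theorem symplJ_mul_self (m : ℕ) : symplJ m * symplJ m = -1 := by
  simp [symplJ, Matrix.fromBlocks_multiply, ← Matrix.fromBlocks_one, Matrix.fromBlocks_neg]

theorem symplJ_transpose (m : ℕ) : (symplJ m)ᵀ = -symplJ m := by
  simp [symplJ, Matrix.fromBlocks_transpose, Matrix.fromBlocks_neg]

theorem psd_real_symm {ι : Type} [Fintype ι] {P : Matrix ι ι ℝ} (hP : P.PosSemidef) :
    Pᵀ = P := by
  have := hP.isHermitian.eq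
  rwa [Matrix.conjTranspose_eq_transpose_of_trivial] at this

/-- A positive semidefinite symplectic matrix is `(SᵀS)⁻¹` for a symplectic `S`. -/
theorem exists_symplectic_of_psd {m : ℕ} (P : Matrix (PS m) (PS m) ℝ) (hP : P.PosSemidef)
    (hPJ : P * symplJ m * P = symplJ m) :
    ∃ S, IsSymplectic S ∧ (Sᵀ * S)⁻¹ = P := by
  obtain ⟨R, hR, hRR, -, -⟩ := real_sqrt_exists P hP
  set J := symplJ m with hJ
  have hJJ : J * J = -1 := symplJ_mul_self m
  have hJT : Jᵀ = -J := symplJ_transpose m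
  have hRT := psd_real_symm hR
  have hPinv : P * (-(J * P * J)) = 1 := by
    calc P * (-(J * P * J)) = -((P * J * P) * J) := by noncomm_ring
      _ = 1 := by rw [hPJ, hJJ, neg_neg]
  have hRinv : R * (R * (-(J * P * J))) = 1 := by rw [← mul_assoc, hRR, hPinv]
  have hdet : IsUnit R.det := (Matrix.isUnit_iff_isUnit_det _).mp (IsUnit.of_mul_eq_one _ hRinv)
  have h1 : R * R⁻¹ = 1 := Matrix.mul_nonsing_inv _ hdet
  have h2 : R⁻¹ * R = 1 := Matrix.nonsing_inv_mul _ hdet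
  have hQ : (-(J * P * J)).PosSemidef := by
    have := hP.conjTranspose_mul_mul_same J
    rw [Matrix.conjTranspose_eq_transpose_of_trivial, hJT] at this
    convert this using 1; noncomm_ring
  have hQ' : (-(J * R * J)).PosSemidef := by
    have := hR.conjTranspose_mul_mul_same J
    rw [Matrix.conjTranspose_eq_transpose_of_trivial, hJT] at this
    convert this using 1; noncomm_ring
  obtain ⟨T, hT, hTT, -, huniq⟩ := real_sqrt_exists _ hQ
  have e1 : R⁻¹ = T := by
    apply huniq _ hR.inv
    calc R⁻¹ * R⁻¹ = R⁻¹ * (R⁻¹ * (P * (-(J * P * J)))) := by rw [hPinv, mul_one]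
      _ = R⁻¹ * ((R⁻¹ * R) * R * (-(J * P * J))) := by rw [← hRR]; noncomm_ring
      _ = (R⁻¹ * R) * (-(J * P * J)) := by
        rw [h2, one_mul, one_mul, ← mul_assoc R⁻¹ R, h2, one_mul]
      _ = _ := by rw [h2, one_mul]
  have e2 : -(J * R * J) = T := by
    apply huniq _ hQ'
    calc -(J * R * J) * -(J * R * J) = J * R * (J * J) * R * J := by noncomm_ring
      _ = -(J * (R * R) * J) := by rw [hJJ]; noncomm_ring
      _ = _ := by rw [hRR]
  have e3 : R⁻¹ = -(J * R * J) := e1.trans e2.symm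
  refine ⟨R⁻¹, ?_, ?_⟩
  · unfold IsSymplectic
    rw [Matrix.transpose_nonsing_inv, hRT, ← hJ]
    nth_rewrite 1 [e3]
    calc -(J * R * J) * J * R⁻¹ = -(J * R * (J * J) * R⁻¹) := by noncomm_ring
      _ = J * (R * R⁻¹) := by rw [hJJ]; noncomm_ring
      _ = J := by rw [h1, mul_one]
  · rw [Matrix.transpose_nonsing_inv, hRT, ← Matrix.mul_inv_rev, hRR]
    exact Matrix.nonsing_inv_nonsing_inv _ (by rw [← hRR, Matrix.det_mul]; exact hdet.mul hdet)

theorem key_lemma {m : ℕ} (M : Matrix (PS m) (PS m) ℝ) (hM : M.IsSymm)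
    (h : ∀ x y : PS m → ℝ, 0 ≤ x ⬝ᵥ M *ᵥ x + y ⬝ᵥ M *ᵥ y - 2 * (x ⬝ᵥ symplJ m *ᵥ y)) :
    ∃ S, IsSymplectic S ∧ (M - (Sᵀ * S)⁻¹).PosSemidef := by
  set J := symplJ m with hJ
  have hJJ : J * J = -1 := symplJ_mul_self m
  have hJT : Jᵀ = -J := symplJ_transpose m
  have hMH : M.IsHermitian := by
    rw [Matrix.IsHermitian, Matrix.conjTranspose_eq_transpose_of_trivial]; exact hM
  have hnn : ∀ x, 0 ≤ x ⬝ᵥ M *ᵥ x := fun x => by simpa using h x 0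
  have hpd : M.PosDef := by
    refine Matrix.PosDef.of_dotProduct_mulVec_pos hMH fun {x} hx => ?_
    rw [star_trivial]
    rcases (hnn x).lt_or_eq with h0 | h0
    · exact h0
    exfalso
    have hb : 0 < x ⬝ᵥ x := by
      have := (dotProduct_star_self_pos_iff (v := x)).mpr hx
      rwa [star_trivial] at this
    set b := x ⬝ᵥ x with hbdef
    set a := (J *ᵥ x) ⬝ᵥ M *ᵥ (J *ᵥ x) with ha
    have ha0 : 0 ≤ a := hnn _
    have := h ((-((a + 1) / b)) • x) (J *ᵥ x)
    rw [← ha, Matrix.mulVec_mulVec, hJJ, Matrix.mulVec_smul, smul_dotProduct, dotProduct_smul,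
      ← h0, smul_dotProduct, Matrix.neg_mulVec, Matrix.one_mulVec, dotProduct_neg, ← hbdef] at this
    simp only [smul_eq_mul, mul_zero, zero_add] at this
    have e : -((a + 1) / b) * -b = a + 1 := by field_simp
    rw [e] at this
    linarith
  obtain ⟨R, hR, hRR, -, -⟩ := real_sqrt_exists M hpd.posSemidef
  have hRT := psd_real_symm hR
  have hdet : IsUnit R.det := by
    have := (Matrix.isUnit_iff_isUnit_det _).mp hpd.isUnit
    rw [← hRR, Matrix.det_mul] at this
    exact isUnit_of_mul_isUnit_left this
  have h1 : R * R⁻¹ = 1 := Matrix.mul_nonsing_inv _ hdet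
  have h2 : R⁻¹ * R = 1 := Matrix.nonsing_inv_mul _ hdet
  have hNT : R⁻¹ᵀ = R⁻¹ := by rw [Matrix.transpose_nonsing_inv, hRT]
  set N := R⁻¹ with hN
  set A := N * J * N with hA
  have hAT : Aᵀ = -A := by
    rw [hA, Matrix.transpose_mul, Matrix.transpose_mul, hNT, hJT]; noncomm_ring
  have hNMN : N * M * N = 1 := by
    rw [← hRR]
    calc N * (R * R) * N = (N * R) * (R * N) := by noncomm_ring
      _ = 1 := by rw [h1, h2, one_mul]
  have hq : ∀ (B : Matrix (PS m) (PS m) ℝ) (u v : PS m → ℝ),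
      (N *ᵥ u) ⬝ᵥ B *ᵥ (N *ᵥ v) = u ⬝ᵥ (N * B * N) *ᵥ v := by
    intro B u v
    rw [Matrix.dotProduct_mulVec, Matrix.dotProduct_mulVec, Matrix.dotProduct_mulVec,
      ← Matrix.vecMul_vecMul, ← Matrix.vecMul_vecMul, ← Matrix.vecMul_transpose, hNT]
  have hC : (Aᵀ * A).PosSemidef := by
    have := Matrix.posSemidef_conjTranspose_mul_self A
    rwa [Matrix.conjTranspose_eq_transpose_of_trivial] at this
  have hle : (1 - Aᵀ * A).PosSemidef := by
    refine Matrix.PosSemidef.of_dotProduct_mulVec_nonneg ?_ fun u => ?_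
    · exact Matrix.isHermitian_one.sub hC.isHermitian
    rw [star_trivial]
    have := h (N *ᵥ u) (N *ᵥ (-(A *ᵥ u)))
    rw [hq, hq, hq, hNMN, ← hA, Matrix.mulVec_neg, Matrix.mulVec_neg,
      Matrix.one_mulVec, Matrix.one_mulVec, Matrix.mulVec_mulVec] at this
    have e : (A *ᵥ u) ⬝ᵥ (A *ᵥ u) = -(u ⬝ᵥ (A * A) *ᵥ u) := by
      rw [Matrix.dotProduct_mulVec, ← Matrix.vecMul_transpose, hAT, Matrix.vecMul_vecMul,
        ← Matrix.dotProduct_mulVec, neg_mul, Matrix.neg_mulVec, dotProduct_neg]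
    simp only [neg_dotProduct, dotProduct_neg, neg_neg] at this
    rw [hAT, Matrix.sub_mulVec, dotProduct_sub, neg_mul, Matrix.neg_mulVec, dotProduct_neg,
      Matrix.one_mulVec]
    linarith
  obtain ⟨D, hD, hDD, hDc, -⟩ := real_sqrt_exists _ hC
  have hDA : Commute D A := by
    apply hDc
    rw [hAT]
    unfold Commute SemiconjBy
    noncomm_ring
  have hDT := psd_real_symm hD
  have hD1 : (1 - D).PosSemidef := by
    have e1 : ((1 - D) * (1 - D)).PosSemidef := by
      have := Matrix.posSemidef_conjTranspose_mul_self (1 - D)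
      rwa [Matrix.conjTranspose_eq_transpose_of_trivial, Matrix.transpose_sub,
        Matrix.transpose_one, hDT] at this
    have e2 := (e1.add hle).smul (show (0 : ℝ) ≤ 1 / 2 by norm_num)
    convert e2 using 1
    rw [← hDD]
    have : (1 - D) * (1 - D) + (1 - D * D) = (2 : ℝ) • (1 - D) := by
      rw [two_smul]; noncomm_ring
    rw [this, smul_smul]; norm_num
  have hRAR : R * A * R = J := by
    calc R * A * R = (R * N) * J * (N * R) := by rw [hA]; noncomm_ring
      _ = J := by rw [h1, h2]; simp
  have hARJR : A * (R * J * R) = -1 := by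
    calc A * (R * J * R) = N * J * (N * R) * J * R := by rw [hA]; noncomm_ring
      _ = N * (J * J) * R := by rw [h2]; noncomm_ring
      _ = -(N * R) := by rw [hJJ]; noncomm_ring
      _ = -1 := by rw [h2]
  obtain ⟨S, hS, hSP⟩ := exists_symplectic_of_psd (R * D * R)
    (by
      have := hD.conjTranspose_mul_mul_same R
      rwa [Matrix.conjTranspose_eq_transpose_of_trivial, hRT] at this)
    (by
      have hRJRA : (R * J * R) * A = -1 := by
        have := mul_eq_one_comm.mp (show A * (-(R * J * R)) = 1 by
          rw [mul_neg, hARJR, neg_neg])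
        rw [neg_mul] at this
        rw [← this, neg_neg]
      have hDJ : D * (R * J * R) * D = A := by
        have hcomm : D * (R * J * R) = (R * J * R) * D := by
          calc D * (R * J * R) = -((-1) * D * (R * J * R)) := by noncomm_ring
            _ = -((R * J * R) * (A * D) * (R * J * R)) := by rw [← hRJRA]; noncomm_ring
            _ = -((R * J * R) * D * (A * (R * J * R))) := by rw [← hDA.eq]; noncomm_ring
            _ = _ := by rw [hARJR]; noncomm_ring
        calc D * (R * J * R) * D = (R * J * R) * (D * D) := by rw [hcomm]; noncomm_ring
          _ = -((R * J * R) * A * A) := by rw [hDD, hAT]; noncomm_ring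
          _ = A := by rw [hRJRA]; noncomm_ring
      calc R * D * R * J * (R * D * R) = R * (D * (R * J * R) * D) * R := by noncomm_ring
        _ = J := by rw [hDJ, hRAR])
  refine ⟨S, hS, ?_⟩
  rw [hSP]
  have := hD1.conjTranspose_mul_mul_same R
  rw [Matrix.conjTranspose_eq_transpose_of_trivial, hRT] at this
  convert this using 1
  rw [← hRR]; noncomm_ring

theorem quantum_real {m : ℕ} {hbar : ℝ} {M : Matrix (PS m) (PS m) ℝ} (hM : M.IsSymm)
    (h : QuantumCond m hbar M) (x y : PS m → ℝ) :
    0 ≤ x ⬝ᵥ M *ᵥ x + y ⬝ᵥ M *ᵥ y - 2 * (hbar / 2) * (x ⬝ᵥ symplJ m *ᵥ y) := by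
  have hb : ∀ (B : Matrix (PS m) (PS m) ℝ) (u v : PS m → ℝ),
      (Complex.ofReal ∘ u) ⬝ᵥ (B.map Complex.ofReal *ᵥ (Complex.ofReal ∘ v)) =
        ((u ⬝ᵥ B *ᵥ v : ℝ) : ℂ) := by
    intro B u v
    simp [dotProduct, Matrix.mulVec]
  have hs := h.dotProduct_mulVec_nonneg (Complex.ofReal ∘ x + Complex.I • (Complex.ofReal ∘ y))
  have hst : star (Complex.ofReal ∘ x + Complex.I • (Complex.ofReal ∘ y)) =
      Complex.ofReal ∘ x - Complex.I • (Complex.ofReal ∘ y) := by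
    ext i; simp [sub_eq_add_neg]
  have hsymM : y ⬝ᵥ M *ᵥ x = x ⬝ᵥ M *ᵥ y := by
    rw [Matrix.dotProduct_mulVec, dotProduct_comm, ← Matrix.mulVec_transpose, hM.eq]
  have hsymJ : y ⬝ᵥ symplJ m *ᵥ x = -(x ⬝ᵥ symplJ m *ᵥ y) := by
    rw [Matrix.dotProduct_mulVec, dotProduct_comm, ← Matrix.mulVec_transpose, symplJ_transpose,
      Matrix.neg_mulVec, dotProduct_neg]
  rw [hst] at hs
  simp only [Matrix.add_mulVec, Matrix.smul_mulVec, Matrix.mulVec_add, Matrix.mulVec_smul,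
    dotProduct_add, dotProduct_smul, sub_dotProduct, smul_dotProduct, hb] at hs
  have := (Complex.le_def.mp hs).1
  simp [hsymM, hsymJ] at this
  linarith

theorem quantum_dominates {m : ℕ} {hbar : ℝ} (hh : 0 < hbar) {M : Matrix (PS m) (PS m) ℝ}
    (hM : M.IsSymm) (h : QuantumCond m hbar M) :
    ∃ S, IsSymplectic S ∧ (M - (hbar / 2) • (Sᵀ * S)⁻¹).PosSemidef := by
  have hc : 0 < hbar / 2 := by positivity
  obtain ⟨S, hS, hp⟩ := key_lemma ((hbar / 2)⁻¹ • M) (by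
      rw [Matrix.IsSymm, Matrix.transpose_smul, hM.eq]) (by
    intro x y
    have := mul_nonneg (inv_nonneg.mpr hc.le) (quantum_real hM h x y)
    simp only [Matrix.smul_mulVec, dotProduct_smul, smul_eq_mul]
    have e : (hbar / 2)⁻¹ * (2 * (hbar / 2) * (x ⬝ᵥ symplJ m *ᵥ y)) =
        2 * (x ⬝ᵥ symplJ m *ᵥ y) := by field_simp
    rw [mul_sub, mul_add, e] at this
    exact this)
  refine ⟨S, hS, ?_⟩
  have := hp.smul hc.le
  rwa [smul_sub, smul_smul, mul_inv_cancel₀ hc.ne', one_smul] at this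

theorem quantum_of_symplectic {m : ℕ} {hbar : ℝ} (hh : 0 < hbar) {S : Matrix (PS m) (PS m) ℝ}
    (hS : IsSymplectic S) :
    ((hbar / 2) • (Sᵀ * S)⁻¹).IsSymm ∧ QuantumCond m hbar ((hbar / 2) • (Sᵀ * S)⁻¹) := by
  have hJJ : symplJ m * symplJ m = -1 := symplJ_mul_self m
  have hJT := symplJ_transpose m
  constructor
  · rw [Matrix.IsSymm, Matrix.transpose_smul, Matrix.transpose_nonsing_inv, Matrix.transpose_mul,
      Matrix.transpose_transpose]
  unfold IsSymplectic at hS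
  have hinv : (-(symplJ m * Sᵀ * symplJ m)) * S = 1 := by
    calc (-(symplJ m * Sᵀ * symplJ m)) * S = -(symplJ m * (Sᵀ * symplJ m * S)) := by noncomm_ring
      _ = 1 := by rw [hS, hJJ, neg_neg]
  have hdet : IsUnit S.det := (Matrix.isUnit_iff_isUnit_det _).mp (IsUnit.of_mul_eq_one_right _ hinv)
  have h1 : S * S⁻¹ = 1 := Matrix.mul_nonsing_inv _ hdet
  have h2 : S⁻¹ * S = 1 := Matrix.nonsing_inv_mul _ hdet
  have h3 : S⁻¹ = -(symplJ m * Sᵀ * symplJ m) := Matrix.inv_eq_left_inv hinv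
  set T := S⁻¹ with hT
  have hP : (Sᵀ * S)⁻¹ = T * Tᵀ := by
    rw [Matrix.mul_inv_rev, hT, Matrix.transpose_nonsing_inv]
  have hTTS : Tᵀ * Sᵀ = 1 := by rw [← Matrix.transpose_mul, h1, Matrix.transpose_one]
  have hSTT : Sᵀ * Tᵀ = 1 := by rw [← Matrix.transpose_mul, h2, Matrix.transpose_one]
  have hTJ : T * symplJ m * Tᵀ = symplJ m := by
    nth_rewrite 1 [h3]
    calc -(symplJ m * Sᵀ * symplJ m) * symplJ m * Tᵀ
        = -(symplJ m * Sᵀ * (symplJ m * symplJ m) * Tᵀ) := by noncomm_ring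
      _ = symplJ m * (Sᵀ * Tᵀ) := by rw [hJJ]; noncomm_ring
      _ = symplJ m := by rw [hSTT, mul_one]
  set Jc : Matrix (PS m) (PS m) ℂ := (symplJ m).map Complex.ofReal with hJc
  set Tc : Matrix (PS m) (PS m) ℂ := T.map Complex.ofReal with hTc
  have hmapmul : ∀ X Y : Matrix (PS m) (PS m) ℝ, (X * Y).map Complex.ofReal =
      X.map Complex.ofReal * Y.map Complex.ofReal := fun X Y =>
    Matrix.map_mul (f := Complex.ofRealHom)
  have hTH : Tcᴴ = Tᵀ.map Complex.ofReal := by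
    ext i j; simp [hTc]
  have hJcJc : Jc * Jc = -1 := by
    rw [hJc, ← hmapmul, hJJ]
    ext i j; by_cases hij : i = j <;> simp [Matrix.one_apply, hij]
  have hJcH : Jcᴴ = -Jc := by
    have : Jcᴴ = (symplJ m)ᵀ.map Complex.ofReal := by ext i j; simp [hJc]
    rw [this, hJT]; ext i j; simp [hJc]
  have hpsd : (1 + Complex.I • Jc).PosSemidef := by
    have hH : (1 + Complex.I • Jc)ᴴ = 1 + Complex.I • Jc := by
      rw [Matrix.conjTranspose_add, Matrix.conjTranspose_one, Matrix.conjTranspose_smul, hJcH]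
      simp
    have := (Matrix.posSemidef_conjTranspose_mul_self (1 + Complex.I • Jc)).smul
      (show (0 : ℝ) ≤ 1 / 2 by norm_num)
    convert this using 1
    rw [hH]
    have e : (1 + Complex.I • Jc) * (1 + Complex.I • Jc) = (2 : ℝ) • (1 + Complex.I • Jc) := by
      rw [add_mul, mul_add, mul_add, smul_mul_smul_comm, hJcJc, Complex.I_mul_I, two_smul]
      simp only [one_mul, mul_one, neg_smul, one_smul, neg_neg]
      abel
    rw [e, smul_smul]; norm_num
  have := (hpsd.mul_mul_conjTranspose_same Tc).smul (show (0 : ℝ) ≤ hbar / 2 by positivity)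
  unfold QuantumCond
  convert this using 1
  rw [mul_add, add_mul, mul_one, smul_add, Matrix.mul_smul, Matrix.smul_mul, hTH, hTc, hJc,
    ← hmapmul, ← hmapmul, ← hmapmul, hTJ, hP]
  congr 1
  ext i j; simp

theorem blockdiag_psd {ι κ : Type} [Fintype ι] [Fintype κ] {A : Matrix ι ι ℝ} {B : Matrix κ κ ℝ}
    (hA : A.PosSemidef) (hB : B.PosSemidef) : (Matrix.fromBlocks A 0 0 B).PosSemidef := by
  refine Matrix.PosSemidef.of_dotProduct_mulVec_nonneg ?_ fun u => ?_
  · rw [Matrix.IsHermitian, Matrix.fromBlocks_conjTranspose, hA.isHermitian.eq,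
      hB.isHermitian.eq]; simp
  · have h1 := hA.dotProduct_mulVec_nonneg (u ∘ Sum.inl)
    have h2 := hB.dotProduct_mulVec_nonneg (u ∘ Sum.inr)
    rw [star_trivial] at *
    rw [Matrix.fromBlocks_mulVec]
    simp only [Matrix.zero_mulVec, add_zero, zero_add]
    simp only [dotProduct, Fintype.sum_sum_type, Sum.elim_inl, Sum.elim_inr, Function.comp] at *
    exact add_nonneg h1 h2

/-- for a real symmetric `2n×2n` matrix `Σ` (`n = n_A + n_B`), the Werner–Wolf
condition (existence of symmetric `Σ_A`, `Σ_B` satisfying the quantum conditions with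
`Σ - Σ_A ⊕ Σ_B ≥ 0`) is equivalent to the existence of symplectic `S_A ∈ Sp(n_A)`,
`S_B ∈ Sp(n_B)` with `Σ - (hbar/2)((S_AᵀS_A)⁻¹ ⊕ (S_BᵀS_B)⁻¹) ≥ 0`. -/
theorem statement3 (nA nB : ℕ) (hA : 0 < nA) (hB : 0 < nB) (hbar : ℝ) (hhb : 0 < hbar)
    (Sig : Matrix (PS nA ⊕ PS nB) (PS nA ⊕ PS nB) ℝ) (hsym : Sig.IsSymm) :
    (∃ (SigA : Matrix (PS nA) (PS nA) ℝ) (SigB : Matrix (PS nB) (PS nB) ℝ),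
        SigA.IsSymm ∧ SigB.IsSymm ∧
        QuantumCond nA hbar SigA ∧ QuantumCond nB hbar SigB ∧
        (Sig - Matrix.fromBlocks SigA 0 0 SigB).PosSemidef) ↔
    (∃ (SA : Matrix (PS nA) (PS nA) ℝ) (SB : Matrix (PS nB) (PS nB) ℝ),
        IsSymplectic SA ∧ IsSymplectic SB ∧
        (Sig - (hbar / 2) •
          Matrix.fromBlocks (SAᵀ * SA)⁻¹ 0 0 (SBᵀ * SB)⁻¹).PosSemidef) := by
  constructor
  · rintro ⟨SigA, SigB, hsA, hsB, hqA, hqB, hp⟩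
    obtain ⟨SA, hSA, hpA⟩ := quantum_dominates hhb hsA hqA
    obtain ⟨SB, hSB, hpB⟩ := quantum_dominates hhb hsB hqB
    refine ⟨SA, SB, hSA, hSB, ?_⟩
    convert hp.add (blockdiag_psd hpA hpB) using 1
    rw [Matrix.fromBlocks_smul, smul_zero, smul_zero]
    ext (i | i) (j | j) <;> simp
  · rintro ⟨SA, SB, hSA, hSB, hp⟩
    obtain ⟨hsA, hqA⟩ := quantum_of_symplectic hhb hSA
    obtain ⟨hsB, hqB⟩ := quantum_of_symplectic hhb hSB
    refine ⟨_, _, hsA, hsB, hqA, hqB, ?_⟩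
    rwa [Matrix.fromBlocks_smul, smul_zero, smul_zero] at hp
end
end

section
/- Let M_AB be an arbitrary real 2n_A×2n_B matrix, and let |M_AB| = (M_AB M_ABᵀ)^{1/2} and |M_BA| = (M_ABᵀ M_AB)^{1/2} denote the positive semidefinite square roots. Then for all z_A ∈ ℝ^{2n_A} and z_B ∈ ℝ^{2n_B}: 2⟨z_A, M_AB z_B⟩ ≤ ⟨|M_AB| z_A, z_A⟩ + ⟨|M_BA| z_B, z_B⟩. Consequently, for any real symmetric matrices M_AA (2n_A×2n_A) and M_BB (2n_B×2n_B), the block matrix M = [[M_AA, M_AB], [M_ABᵀ, M_BB]] satisfies: ((M_AA + |M_AB|) ⊕ (M_BB + |M_BA|)) − M is positive semidefinite. -/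
open Matrix

noncomputable section

theorem aux_posSemidef_sub {n : Type*} [Fintype n] [DecidableEq n] (P H : Matrix n n ℝ)
    (hP : P.PosSemidef) (hH : H.IsHermitian) (h : P * P = H * H) : (P - H).PosSemidef := by
  have hPH : (P - H).IsHermitian := hP.1.sub hH
  rw [hPH.posSemidef_iff_eigenvalues_nonneg]
  intro i
  by_contra hneg
  have hneg : hPH.eigenvalues i < 0 := lt_of_not_ge hneg
  have hv := hPH.mulVec_eigenvectorBasis i
  set l := hPH.eigenvalues i
  have hv0 : (hPH.eigenvectorBasis i).ofLp ≠ 0 := by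
    intro h0
    exact hPH.eigenvectorBasis.toBasis.ne_zero i (by
      rw [OrthonormalBasis.coe_toBasis]
      ext j
      simpa using congrFun h0 j)
  generalize (hPH.eigenvectorBasis i).ofLp = v at hv hv0
  have hHv : H *ᵥ v = P *ᵥ v - l • v := by
    rw [← hv, Matrix.sub_mulVec]; abel
  have key : ∀ Q : Matrix n n ℝ, Q.IsHermitian →
      (Q *ᵥ v) ⬝ᵥ (Q *ᵥ v) = v ⬝ᵥ ((Q * Q) *ᵥ v) := by
    intro Q hQ
    have hQ' : Qᵀ = Q := by simpa [Matrix.IsHermitian] using hQ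
    rw [← Matrix.mulVec_mulVec, Matrix.dotProduct_mulVec v Q, ← Matrix.mulVec_transpose, hQ']
  have h1 : (H *ᵥ v) ⬝ᵥ (H *ᵥ v) = (P *ᵥ v) ⬝ᵥ (P *ᵥ v) := by
    rw [key H hH, key P hP.1, h]
  have h2 : 0 ≤ v ⬝ᵥ (P *ᵥ v) := by
    simpa using hP.dotProduct_mulVec_nonneg v
  have h3 : 0 < v ⬝ᵥ v := by
    simpa using Matrix.dotProduct_star_self_pos_iff.2 hv0
  rw [hHv] at h1
  simp only [sub_dotProduct, dotProduct_sub, smul_dotProduct, dotProduct_smul, smul_eq_mul,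
    dotProduct_comm (P *ᵥ v) v] at h1
  nlinarith [mul_nonneg (neg_nonneg.2 hneg.le) h2, mul_pos (mul_pos_of_neg_of_neg hneg hneg) h3]

/-- for any real `2n_A×2n_B` matrix `M_AB`, with `|M_AB|` and `|M_BA|` the
positive semidefinite square roots of `M_AB M_ABᵀ` and `M_ABᵀ M_AB`, one has
`2⟨z_A, M_AB z_B⟩ ≤ ⟨|M_AB|z_A, z_A⟩ + ⟨|M_BA|z_B, z_B⟩` for all `z_A`, `z_B`; consequently
`((M_AA + |M_AB|) ⊕ (M_BB + |M_BA|)) - M` is positive semidefinite for any symmetric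
`M_AA`, `M_BB`, where `M = [[M_AA, M_AB], [M_ABᵀ, M_BB]]`. -/
theorem statement12 (nA nB : ℕ) (hA : 0 < nA) (hB : 0 < nB)
    (MAB : Matrix (Fin (2*nA)) (Fin (2*nB)) ℝ)
    (absA : Matrix (Fin (2*nA)) (Fin (2*nA)) ℝ)
    (absB : Matrix (Fin (2*nB)) (Fin (2*nB)) ℝ)
    (habsA : absA.PosSemidef) (habsAsq : absA * absA = MAB * MABᵀ)
    (habsB : absB.PosSemidef) (habsBsq : absB * absB = MABᵀ * MAB) :
    (∀ (zA : Fin (2*nA) → ℝ) (zB : Fin (2*nB) → ℝ),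
        2 * (zA ⬝ᵥ (MAB *ᵥ zB)) ≤ (absA *ᵥ zA) ⬝ᵥ zA + (absB *ᵥ zB) ⬝ᵥ zB) ∧
    (∀ (MAA : Matrix (Fin (2*nA)) (Fin (2*nA)) ℝ)
        (MBB : Matrix (Fin (2*nB)) (Fin (2*nB)) ℝ), MAA.IsSymm → MBB.IsSymm →
        (Matrix.fromBlocks (MAA + absA) 0 0 (MBB + absB) -
          Matrix.fromBlocks MAA MAB MABᵀ MBB).PosSemidef) := by
  have hM : (Matrix.fromBlocks absA 0 0 absB - Matrix.fromBlocks 0 MAB MABᵀ 0).PosSemidef := by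
    apply aux_posSemidef_sub
    · refine Matrix.PosSemidef.of_dotProduct_mulVec_nonneg ?_ ?_
      · exact Matrix.IsHermitian.fromBlocks habsA.1 (by simp) habsB.1
      · intro x
        have ha := habsA.dotProduct_mulVec_nonneg (x ∘ Sum.inl)
        have hb := habsB.dotProduct_mulVec_nonneg (x ∘ Sum.inr)
        simp only [star_trivial] at ha hb ⊢
        rw [Matrix.fromBlocks_mulVec]
        have := add_nonneg ha hb
        simpa [dotProduct, Fintype.sum_sum_type] using this
    · exact Matrix.IsHermitian.fromBlocks (by simp) (by simp) (by simp)
    · simp [Matrix.fromBlocks_multiply, habsAsq, habsBsq]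
  constructor
  · intro zA zB
    have h := hM.dotProduct_mulVec_nonneg (Sum.elim zA zB)
    have e : zB ⬝ᵥ (MABᵀ *ᵥ zA) = zA ⬝ᵥ (MAB *ᵥ zB) := by
      rw [Matrix.mulVec_transpose, dotProduct_comm, Matrix.dotProduct_mulVec]
    simp only [star_trivial, Matrix.sub_mulVec, dotProduct_sub, Matrix.fromBlocks_mulVec,
      Sum.elim_comp_inl, Sum.elim_comp_inr, Matrix.zero_mulVec, add_zero, zero_add,
      sumElim_dotProduct_sumElim, e] at h
    rw [dotProduct_comm _ zA, dotProduct_comm _ zB]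
    linarith
  · intro MAA MBB _ _
    convert hM using 1
    simp [sub_eq_add_neg, Matrix.fromBlocks_neg, Matrix.fromBlocks_add]
end
end
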